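/- arXiv:2605.28440 — 4 statements merged into one kernel-verified Lean document; each statement's English description precedes it below -/
import Mathlib

section
/- Let β > 0 and x_w, x_l > 0 be real numbers. Let d_w be the derivative at x_w of the function F(x) = −log σ(β·log x − β·log x_l), and let d_l be the derivative at x_l of the function G(x) = −log σ(β·log x_w − β·log x) (these derivatives exist). Then d_l ≠ 0 and |d_w| / |d_l| = x_l / x_w. -/
/-! The softplus identity `-log σ(t) = log (1 + exp (-t))` gives `(-log σ)'(t) = -c(t)` with
`c(t) = exp (-t) / (1 + exp (-t)) > 0`. Both losses evaluate `-log σ` at the same point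
`t = β log xw - β log xl`, so the chain rule gives `d_w = -c(t) β / xw` and `d_l = c(t) β / xl`:
the common positive factor `c(t) β` cancels in the ratio. -/

/-- The logistic sigmoid σ(t) = 1/(1 + exp(−t)). -/
noncomputable def sigmoid (t : ℝ) : ℝ := 1 / (1 + Real.exp (-t))

lemma hasDerivAt_neg_log_sigmoid (t : ℝ) :
    HasDerivAt (fun s : ℝ => -Real.log (sigmoid s))
      (-(Real.exp (-t) / (1 + Real.exp (-t)))) t := by
  have hfun : (fun s : ℝ => -Real.log (sigmoid s)) = fun s => Real.log (1 + Real.exp (-s)) := by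
    funext s
    simp [sigmoid, Real.log_inv]
  rw [hfun]
  have hpos : 1 + Real.exp (-t) ≠ 0 := by positivity
  have h := (((hasDerivAt_neg t).exp).const_add 1).log hpos
  convert h using 1
  ring

/-- the gradient-magnitude ratio of the DPO loss in ratio space is
`|d_w| / |d_l| = x_l / x_w`, with `d_l ≠ 0`. -/
theorem dpo_ratio_gradient_ratio (β xw xl : ℝ) (hβ : 0 < β) (hxw : 0 < xw) (hxl : 0 < xl) :
    deriv (fun x : ℝ => -Real.log (sigmoid (β * Real.log xw - β * Real.log x))) xl ≠ 0 ∧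
    |deriv (fun x : ℝ => -Real.log (sigmoid (β * Real.log x - β * Real.log xl))) xw| /
      |deriv (fun x : ℝ => -Real.log (sigmoid (β * Real.log xw - β * Real.log x))) xl| =
      xl / xw := by
  set t := β * Real.log xw - β * Real.log xl with ht
  set c := Real.exp (-t) / (1 + Real.exp (-t)) with hc
  have hcpos : 0 < c := by positivity
  have hl : deriv (fun x : ℝ => -Real.log (sigmoid (β * Real.log xw - β * Real.log x))) xl =
      c * β / xl := by
    have h1 : HasDerivAt (fun x : ℝ => β * Real.log xw - β * Real.log x) (-(β * xl⁻¹)) xl :=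
      ((Real.hasDerivAt_log hxl.ne').const_mul β).const_sub _
    have h := (hasDerivAt_neg_log_sigmoid t).comp xl h1
    refine h.deriv.trans ?_
    rw [← hc]
    ring
  have hw : deriv (fun x : ℝ => -Real.log (sigmoid (β * Real.log x - β * Real.log xl))) xw =
      -(c * β / xw) := by
    have h1 : HasDerivAt (fun x : ℝ => β * Real.log x - β * Real.log xl) (β * xw⁻¹) xw :=
      ((Real.hasDerivAt_log hxw.ne').const_mul β).sub_const _
    have h := (hasDerivAt_neg_log_sigmoid t).comp xw h1
    refine h.deriv.trans ?_
    rw [← hc]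
    ring
  have hlpos : 0 < c * β / xl := by positivity
  have hwpos : 0 < c * β / xw := by positivity
  rw [hl, hw, abs_neg, abs_of_pos hlpos, abs_of_pos hwpos]
  refine ⟨hlpos.ne', ?_⟩
  field_simp
end

section
/- (General balance condition, policy space.) Let f : ℝ → ℝ be differentiable, let β_w, β_l > 0, λ ∈ ℝ, and P_w, P_l > 0 be real numbers, and set z = β_w·log P_w − β_l·log P_l + λ. Assume f′(z) ≠ 0. Let d_w be the derivative at P_w of P ↦ f(β_w·log P − β_l·log P_l + λ), and let d_l be the derivative at P_l of P ↦ f(β_w·log P_w − β_l·log P + λ). Then |d_w| = |d_l| if and only if β_w / β_l = P_w / P_l. -/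
/-! By the chain rule the two partial derivatives at the margin `z` are `f'(z) * (βw / Pw)` and
`f'(z) * (-(βl / Pl))`. Since `f'(z) ≠ 0` and all other factors are positive, their absolute values
agree exactly when `βw / Pw = βl / Pl`, which rearranges to `βw / βl = Pw / Pl`. -/

/-- General balance condition, policy space: for any
differentiable `f` with `f'(z) ≠ 0` at the margin `z`, the loss
`P ↦ f(β_w·log P_w − β_l·log P_l + λ)` has `|d_w| = |d_l|` iff
`β_w / β_l = P_w / P_l`. -/
theorem general_balance_policy (f : ℝ → ℝ) (hf : Differentiable ℝ f)
    (βw βl lam Pw Pl : ℝ) (hβw : 0 < βw) (hβl : 0 < βl)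
    (hPw : 0 < Pw) (hPl : 0 < Pl)
    (hz : deriv f (βw * Real.log Pw - βl * Real.log Pl + lam) ≠ 0) :
    (|deriv (fun P : ℝ => f (βw * Real.log P - βl * Real.log Pl + lam)) Pw| =
     |deriv (fun P : ℝ => f (βw * Real.log Pw - βl * Real.log P + lam)) Pl|)
    ↔ βw / βl = Pw / Pl := by
  have hw : HasDerivAt (fun P : ℝ => f (βw * Real.log P - βl * Real.log Pl + lam))
      (deriv f (βw * Real.log Pw - βl * Real.log Pl + lam) * (βw * Pw⁻¹)) Pw :=
    (hf _).hasDerivAt.comp Pw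
      ((((Real.hasDerivAt_log hPw.ne').const_mul βw).sub_const _).add_const lam)
  have hl : HasDerivAt (fun P : ℝ => f (βw * Real.log Pw - βl * Real.log P + lam))
      (deriv f (βw * Real.log Pw - βl * Real.log Pl + lam) * (-(βl * Pl⁻¹))) Pl :=
    (hf _).hasDerivAt.comp Pl
      ((((Real.hasDerivAt_log hPl.ne').const_mul βl).const_sub _).add_const lam)
  have hw0 : 0 < βw * Pw⁻¹ := by positivity
  have hl0 : 0 < βl * Pl⁻¹ := by positivity
  rw [hw.deriv, hl.deriv, abs_mul _ (βw * Pw⁻¹),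
    abs_mul _ (-(βl * Pl⁻¹)), abs_neg, abs_of_pos hw0, abs_of_pos hl0,
    mul_right_inj' (abs_ne_zero.mpr hz), ← div_eq_mul_inv, ← div_eq_mul_inv,
    div_eq_div_iff hPw.ne' hPl.ne', div_eq_div_iff hβl.ne' hPl.ne', mul_comm βl Pw]
end

section
/- (General balance condition, ratio space.) Let f : ℝ → ℝ be differentiable, let β_w, β_l > 0, λ ∈ ℝ, and x_w, x_l > 0 be real numbers, and set z = β_w·log x_w − β_l·log x_l + λ. Assume f′(z) ≠ 0. Let d_w be the derivative at x_w of x ↦ f(β_w·log x − β_l·log x_l + λ), and let d_l be the derivative at x_l of x ↦ f(β_w·log x_w − β_l·log x + λ). Then |d_w| = |d_l| if and only if β_w / β_l = x_w / x_l. -/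
/-! By the chain rule, both partial derivatives carry the common factor `f'(z)`:
`d_w = f'(z) * (βw / xw)` and `d_l = f'(z) * (-(βl / xl))`. Since `f'(z) ≠ 0` and the remaining
factors have known signs, `|d_w| = |d_l|` amounts to `βw / xw = βl / xl`, which cross-multiplies
to the claimed ratio. -/

/-- General balance condition, ratio space: for any
differentiable `f` with `f'(z) ≠ 0` at the margin `z`, the loss
`x ↦ f(β_w·log x_w − β_l·log x_l + λ)` has `|d_w| = |d_l|` iff
`β_w / β_l = x_w / x_l`. -/
theorem general_balance_ratio (f : ℝ → ℝ) (hf : Differentiable ℝ f)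
    (βw βl lam xw xl : ℝ) (hβw : 0 < βw) (hβl : 0 < βl)
    (hxw : 0 < xw) (hxl : 0 < xl)
    (hz : deriv f (βw * Real.log xw - βl * Real.log xl + lam) ≠ 0) :
    (|deriv (fun x : ℝ => f (βw * Real.log x - βl * Real.log xl + lam)) xw| =
     |deriv (fun x : ℝ => f (βw * Real.log xw - βl * Real.log x + lam)) xl|)
    ↔ βw / βl = xw / xl := by
  have hw := (hf (βw * Real.log xw - βl * Real.log xl + lam)).hasDerivAt.comp xw
    ((((Real.hasDerivAt_log hxw.ne').const_mul βw).sub_const (βl * Real.log xl)).add_const lam)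
  have hl := (hf (βw * Real.log xw - βl * Real.log xl + lam)).hasDerivAt.comp xl
    ((((Real.hasDerivAt_log hxl.ne').const_mul βl).const_sub (βw * Real.log xw)).add_const lam)
  have ew := hw.deriv
  have el := hl.deriv
  simp only [Function.comp_def] at ew el
  rw [ew, el, mul_neg, abs_neg, abs_mul _ (βw * xw⁻¹), abs_mul _ (βl * xl⁻¹),
    abs_of_pos (mul_pos hβw (inv_pos.2 hxw)),
    abs_of_pos (mul_pos hβl (inv_pos.2 hxl)), mul_right_inj' (abs_ne_zero.2 hz),
    ← div_eq_mul_inv, ← div_eq_mul_inv, div_eq_div_iff hxw.ne' hxl.ne',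
    div_eq_div_iff hβl.ne' hxl.ne', mul_comm βl xw]
end

section
/- (Self-adaptive IPO is balanced.) Let τ > 0 and x_w, x_l > 0 be real numbers, and set the stop-gradient coefficient β_w = x_w/x_l, treated as a constant. Let d_w be the derivative at x_w of x ↦ (β_w·log x − log x_l − 1/(2τ))², and let d_l be the derivative at x_l of x ↦ (β_w·log x_w − log x − 1/(2τ))². Then |d_w| = |d_l|. -/
/-- Self-adaptive IPO is balanced: with the stop-gradient
coefficient `β_w = x_w/x_l` treated as a constant, the IPO loss
`(β_w·log x − log x_l − 1/(2τ))²` has `|d_w| = |d_l|`. -/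
theorem adaptive_ipo_balanced (τ xw xl βw : ℝ) (hτ : 0 < τ)
    (hxw : 0 < xw) (hxl : 0 < xl) (hβw : βw = xw / xl) :
    |deriv (fun x : ℝ => (βw * Real.log x - Real.log xl - 1 / (2 * τ)) ^ 2) xw| =
    |deriv (fun x : ℝ => (βw * Real.log xw - Real.log x - 1 / (2 * τ)) ^ 2) xl| := by
  have h₁ := (((((Real.hasDerivAt_log hxw.ne').const_mul βw).sub_const
    (Real.log xl)).sub_const (1 / (2 * τ))).pow 2).deriv
  have h₂ := ((((Real.hasDerivAt_log hxl.ne').const_sub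
    (βw * Real.log xw)).sub_const (1 / (2 * τ))).pow 2).deriv
  -- The two inner derivatives are `βw / xw = 1 / xl` and `-1 / xl`.
  have hβ : βw * xw⁻¹ = xl⁻¹ := by
    rw [hβw]
    field_simp
  rw [hβ] at h₁
  rw [← abs_neg (deriv _ xl)]
  congr 1
  refine h₁.trans (Eq.trans ?_ (congrArg Neg.neg h₂).symm)
  ring
end
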